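/- Let n ≥ 2, let 0 < θ and θ/2 ≤ φ ≤ π/2. Then Ω_n(φ) · A(n,θ) ≤ Ω_n · A(n,θ,φ), where Ω_n(φ) is the surface measure of the cap Cap(n,φ) and Ω_n is the surface measure of the whole sphere S^{n−1}. -/

import Mathlib

noncomputable section

/-- The "North pole" `(0, …, 0, 1)` of the unit sphere in `ℝ^n`. -/
def north (n : ℕ) : EuclideanSpace ℝ (Fin n) :=
  if h : 0 < n then EuclideanSpace.single ⟨n - 1, Nat.sub_lt h Nat.one_pos⟩ 1 else 0

/-- Angular distance between two points: `arccos ⟨x, y⟩`. -/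
def aDist {n : ℕ} (x y : EuclideanSpace ℝ (Fin n)) : ℝ := Real.arccos (inner ℝ x y : ℝ)

/-- A finite set of unit vectors with pairwise angular distance at least `θ`. -/
def IsCode {n : ℕ} (θ : ℝ) (C : Finset (EuclideanSpace ℝ (Fin n))) : Prop :=
  (∀ x ∈ C, ‖x‖ = 1) ∧ ∀ x ∈ C, ∀ y ∈ C, x ≠ y → θ ≤ aDist x y

/-- `A(n, θ)`: maximal size of a `θ`-code on the unit sphere `S^{n-1} ⊂ ℝ^n`. -/
def sphereMax (n : ℕ) (θ : ℝ) : ℕ :=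
  sSup {M | ∃ C : Finset (EuclideanSpace ℝ (Fin n)), IsCode θ C ∧ C.card = M}

/-- `A(n, θ, φ)`: maximal size of a `θ`-code in the cap of angular radius `φ` about the
North pole. -/
def capMax (n : ℕ) (θ φ : ℝ) : ℕ :=
  sSup {M | ∃ C : Finset (EuclideanSpace ℝ (Fin n)), IsCode θ C ∧
    (∀ x ∈ C, aDist x (north n) ≤ φ) ∧ C.card = M}

/-- `A(n, θ, [ψ, φ])`: maximal size of a `θ`-code in the strip `Z(n, [ψ, φ])`. -/
def stripMax (n : ℕ) (θ ψ φ : ℝ) : ℕ :=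
  sSup {M | ∃ C : Finset (EuclideanSpace ℝ (Fin n)), IsCode θ C ∧
    (∀ x ∈ C, ψ ≤ aDist x (north n) ∧ aDist x (north n) ≤ φ) ∧ C.card = M}

/-- `m(n, d)`: maximal number of points in the closed unit ball of `ℝ^n` with pairwise
Euclidean distances at least `d`. -/
def ballMax (n : ℕ) (d : ℝ) : ℕ :=
  sSup {M | ∃ C : Finset (EuclideanSpace ℝ (Fin n)), (∀ x ∈ C, ‖x‖ ≤ 1) ∧
    (∀ x ∈ C, ∀ y ∈ C, x ≠ y → d ≤ dist x y) ∧ C.card = M}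

/-- `ω(θ, α, β) = arccos((cos θ - cos α cos β) / (sin α sin β))`. -/
def omega2 (θ α β : ℝ) : ℝ :=
  Real.arccos ((Real.cos θ - Real.cos α * Real.cos β) / (Real.sin α * Real.sin β))

/-- `ω(θ, α) := ω(θ, α, α)`. -/
def omega1 (θ α : ℝ) : ℝ := omega2 θ α α

end


/-! Put a cap of radius `φ` around every point of an optimal `θ`-code `C` of the whole sphere. By
rotation invariance these `A(n, θ)` caps all have the measure of `Cap(n, φ)`. A point `y` of the
sphere lies in the cap around `x` exactly when `x` lies in the cap around `y`, and the part of `C`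
in the cap around `y` can be rotated into `Cap(n, φ)`; hence every `y` is covered at most
`A(n, θ, φ)` times, and integrating the multiplicity of the covering gives the inequality. -/

open MeasureTheory Metric
open scoped NNReal ENNReal Finset

theorem exists_linearIsometryEquiv_apply_eq {E : Type*} [NormedAddCommGroup E]
    [InnerProductSpace ℝ E] {x y : E} (h : ‖x‖ = ‖y‖) : ∃ T : E ≃ₗᵢ[ℝ] E, T x = y :=
  ⟨_, Submodule.reflection_sub h⟩

theorem packingNumber_ne_top_of_totallyBounded {X : Type*} [PseudoEMetricSpace X] {ε : ℝ≥0}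
    {s : Set X} (hε : ε ≠ 0) (hs : TotallyBounded s) : packingNumber ε s ≠ ⊤ := by
  obtain ⟨N, -, hN, hcover⟩ :=
    exists_finite_isCover_of_totallyBounded (div_ne_zero hε two_ne_zero) hs
  refine ne_top_of_le_ne_top hN.encard_lt_top.ne ?_
  calc packingNumber ε s = packingNumber (2 * (ε / 2)) s := by
        rw [mul_div_cancel₀ ε two_ne_zero]
    _ ≤ externalCoveringNumber (ε / 2) s := packingNumber_two_mul_le_externalCoveringNumber _ _
    _ ≤ N.encard := hcover.externalCoveringNumber_le_encard

open Classical in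
theorem sum_measure_le_mul_of_card_le {α ι : Type*} [MeasurableSpace α] {μ : Measure α}
    {s : Set α} {I : Finset ι} {A : ι → Set α} {k : ℕ}
    (hA : ∀ i ∈ I, NullMeasurableSet (A i) μ) (hs : ∀ i ∈ I, A i ⊆ s)
    (hk : ∀ y ∈ s, #{i ∈ I | y ∈ A i} ≤ k) :
    ∑ i ∈ I, μ (A i) ≤ μ s * k := by
  have multiplicity_le (y : α) :
      ∑ i ∈ I, (A i).indicator (1 : α → ℝ≥0∞) y ≤ s.indicator (fun _ ↦ (k : ℝ≥0∞)) y := by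
    by_cases hy : y ∈ s
    · simpa [Set.indicator_apply, hy] using hk y hy
    · have hyA : ∀ i ∈ I, y ∉ A i := fun i hi h ↦ hy (hs i hi h)
      simp +contextual [Set.indicator_apply, hyA]
  calc ∑ i ∈ I, μ (A i) = ∑ i ∈ I, ∫⁻ y, (A i).indicator 1 y ∂μ :=
        Finset.sum_congr rfl fun i hi ↦ (lintegral_indicator_one₀ (hA i hi)).symm
    _ = ∫⁻ y, ∑ i ∈ I, (A i).indicator 1 y ∂μ :=
        (lintegral_finsetSum' I fun i hi ↦ aemeasurable_const.indicator₀ (hA i hi)).symm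
    _ ≤ ∫⁻ y, s.indicator (fun _ ↦ (k : ℝ≥0∞)) y ∂μ := lintegral_mono multiplicity_le
    _ ≤ μ s * k := (lintegral_indicator_const_le s _).trans_eq (mul_comm _ _)

section AngularDistance

variable {m n : ℕ}

theorem aDist_comm (x y : EuclideanSpace ℝ (Fin n)) : aDist x y = aDist y x := by
  rw [aDist, aDist, real_inner_comm]

theorem aDist_map (T : EuclideanSpace ℝ (Fin m) →ₗᵢ[ℝ] EuclideanSpace ℝ (Fin n))
    (x y : EuclideanSpace ℝ (Fin m)) : aDist (T x) (T y) = aDist x y := by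
  rw [aDist, aDist, T.inner_map_map]

theorem continuous_aDist_left (x : EuclideanSpace ℝ (Fin n)) : Continuous (aDist · x) :=
  Real.continuous_arccos.comp (continuous_id.inner continuous_const)

theorem aDist_eq_arccos_dist {x y : EuclideanSpace ℝ (Fin n)} (hx : ‖x‖ = 1) (hy : ‖y‖ = 1) :
    aDist x y = Real.arccos (1 - dist x y ^ 2 / 2) := by
  rw [aDist, dist_eq_norm, norm_sub_sq_real, hx, hy]
  congr 1
  ring

theorem norm_north (hn : 0 < n) : ‖north n‖ = 1 := by
  simp [north, hn]

end AngularDistance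

section Cap

variable {n : ℕ}

/-- The spherical cap of angular radius `φ` about `x`; for `x = north n` it is the `Cap(n, φ)` of
the paper. -/
def sphericalCap (x : EuclideanSpace ℝ (Fin n)) (φ : ℝ) : Set (EuclideanSpace ℝ (Fin n)) :=
  {y | ‖y‖ = 1 ∧ aDist y x ≤ φ}

theorem mem_sphericalCap_comm {x y : EuclideanSpace ℝ (Fin n)} {φ : ℝ} (hx : ‖x‖ = 1)
    (hy : ‖y‖ = 1) : x ∈ sphericalCap y φ ↔ y ∈ sphericalCap x φ := by
  simp only [sphericalCap, Set.mem_ofPred_eq, hx, hy, aDist_comm x y]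

theorem isClosed_sphericalCap (x : EuclideanSpace ℝ (Fin n)) (φ : ℝ) :
    IsClosed (sphericalCap x φ) :=
  (isClosed_eq continuous_norm continuous_const).inter
    (isClosed_le (continuous_aDist_left x) continuous_const)

theorem map_mem_sphericalCap_iff {m : ℕ}
    (T : EuclideanSpace ℝ (Fin m) →ₗᵢ[ℝ] EuclideanSpace ℝ (Fin n))
    {x y : EuclideanSpace ℝ (Fin m)} {φ : ℝ} :
    T y ∈ sphericalCap (T x) φ ↔ y ∈ sphericalCap x φ := by
  simp only [sphericalCap, Set.mem_ofPred_eq, T.norm_map, aDist_map]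

theorem measure_sphericalCap_eq {μ : Measure (EuclideanSpace ℝ (Fin n))}
    (hμ : ∀ T : EuclideanSpace ℝ (Fin n) ≃ₗᵢ[ℝ] EuclideanSpace ℝ (Fin n), MeasurePreserving T μ μ)
    {x y : EuclideanSpace ℝ (Fin n)} (h : ‖x‖ = ‖y‖) (φ : ℝ) :
    μ (sphericalCap x φ) = μ (sphericalCap y φ) := by
  obtain ⟨T, rfl⟩ := exists_linearIsometryEquiv_apply_eq h
  have preimage_cap : T ⁻¹' sphericalCap (T x) φ = sphericalCap x φ :=
    Set.ext fun _ ↦ map_mem_sphericalCap_iff T.toLinearIsometry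
  rw [← preimage_cap, (hμ T).measure_preimage (isClosed_sphericalCap _ φ).nullMeasurableSet]

end Cap

section Code

variable {m n : ℕ} {θ φ : ℝ}

theorem IsCode.subset {C D : Finset (EuclideanSpace ℝ (Fin n))} (hD : IsCode θ D) (h : C ⊆ D) :
    IsCode θ C :=
  ⟨fun x hx ↦ hD.1 x (h hx), fun x hx y hy ↦ hD.2 x (h hx) y (h hy)⟩

theorem IsCode.map {C : Finset (EuclideanSpace ℝ (Fin m))} (hC : IsCode θ C)
    (T : EuclideanSpace ℝ (Fin m) →ₗᵢ[ℝ] EuclideanSpace ℝ (Fin n)) :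
    IsCode θ (C.map ⟨T, T.injective⟩) := by
  simp only [IsCode, Finset.forall_mem_map, Function.Embedding.coeFn_mk, T.norm_map, aDist_map]
  exact ⟨hC.1, fun x hx y hy hxy ↦ hC.2 x hx y hy (ne_of_apply_ne T hxy)⟩

theorem exists_forall_isCode_isSeparated (hθ : 0 < θ) :
    ∃ ε : ℝ≥0, ε ≠ 0 ∧
      ∀ C : Finset (EuclideanSpace ℝ (Fin n)), IsCode θ C →
        IsSeparated ε (C : Set (EuclideanSpace ℝ (Fin n))) := by
  have small_angle : ∀ᶠ d in nhds (0 : ℝ), Real.arccos (1 - d ^ 2 / 2) < θ := by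
    have hcont : Continuous fun d : ℝ ↦ Real.arccos (1 - d ^ 2 / 2) := by fun_prop
    exact hcont.continuousAt.eventually_lt_const (by simpa using hθ)
  obtain ⟨δ, hδ, angle_lt⟩ := Metric.eventually_nhds_iff.1 small_angle
  refine ⟨(δ / 2).toNNReal, (Real.toNNReal_pos.2 (half_pos hδ)).ne',
    fun C hC x hx y hy hxy ↦ ?_⟩
  have le_dist : δ ≤ dist x y := by
    by_contra! hlt
    refine (hC.2 x hx y hy hxy).not_gt ?_
    rw [aDist_eq_arccos_dist (hC.1 x hx) (hC.1 y hy)]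
    exact angle_lt (by simpa using hlt)
  calc ENNReal.ofReal (δ / 2) < ENNReal.ofReal δ :=
        (ENNReal.ofReal_lt_ofReal_iff hδ).2 (half_lt_self hδ)
    _ ≤ ENNReal.ofReal (dist x y) := ENNReal.ofReal_le_ofReal le_dist
    _ = edist x y := (edist_dist x y).symm

theorem bddAbove_card_isCode (n : ℕ) (hθ : 0 < θ) :
    BddAbove {M | ∃ C : Finset (EuclideanSpace ℝ (Fin n)), IsCode θ C ∧ #C = M} := by
  obtain ⟨ε, hε, isSeparated⟩ := exists_forall_isCode_isSeparated (n := n) hθ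
  obtain ⟨K, hK⟩ := ENat.ne_top_iff_exists.1 <| packingNumber_ne_top_of_totallyBounded hε
    (isCompact_sphere (0 : EuclideanSpace ℝ (Fin n)) 1).totallyBounded
  refine ⟨K, ?_⟩
  rintro _ ⟨C, hC, rfl⟩
  have encard_le := (isSeparated C hC).encard_le_packingNumber
    fun x hx ↦ mem_sphere_zero_iff_norm.2 (hC.1 x hx)
  rw [← hK, Set.encard_coe_eq_coe_finsetCard] at encard_le
  exact_mod_cast encard_le

theorem exists_isCode_card_eq_sphereMax (n : ℕ) (hθ : 0 < θ) :
    ∃ C : Finset (EuclideanSpace ℝ (Fin n)), IsCode θ C ∧ #C = sphereMax n θ := by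
  have nonempty : {M | ∃ C : Finset (EuclideanSpace ℝ (Fin n)), IsCode θ C ∧ #C = M}.Nonempty :=
    ⟨0, ∅, by simp [IsCode], rfl⟩
  exact Nat.sSup_mem nonempty (bddAbove_card_isCode n hθ)

theorem IsCode.card_le_capMax {C : Finset (EuclideanSpace ℝ (Fin n))} (hC : IsCode θ C)
    (hθ : 0 < θ) (hcap : ∀ x ∈ C, x ∈ sphericalCap (north n) φ) : #C ≤ capMax n θ φ := by
  rw [capMax]
  refine le_csSup ((bddAbove_card_isCode n hθ).mono ?_) ⟨C, hC, fun x hx ↦ (hcap x hx).2, rfl⟩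
  exact fun _ ⟨D, hD, _, hM⟩ ↦ ⟨D, hD, hM⟩

theorem IsCode.card_le_capMax_of_subset_sphericalCap {C : Finset (EuclideanSpace ℝ (Fin n))}
    (hC : IsCode θ C) (hn : 0 < n) (hθ : 0 < θ) {y : EuclideanSpace ℝ (Fin n)} (hy : ‖y‖ = 1)
    (hcap : ∀ x ∈ C, x ∈ sphericalCap y φ) : #C ≤ capMax n θ φ := by
  obtain ⟨T, hT⟩ := exists_linearIsometryEquiv_apply_eq (hy.trans (norm_north hn).symm)
  rw [← C.card_map ⟨T, T.injective⟩]
  refine (hC.map T.toLinearIsometry).card_le_capMax hθ (Finset.forall_mem_map.2 fun x hx ↦ ?_)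
  rw [← hT]
  exact (map_mem_sphericalCap_iff T.toLinearIsometry).2 (hcap x hx)

end Code

theorem stmt13_general (n : ℕ) (hn : 0 < n) (θ φ : ℝ) (hθ : 0 < θ)
    (μ : Measure (EuclideanSpace ℝ (Fin n)))
    (hμ : ∀ T : EuclideanSpace ℝ (Fin n) ≃ₗᵢ[ℝ] EuclideanSpace ℝ (Fin n),
      MeasurePreserving T μ μ) :
    μ (sphericalCap (north n) φ) * (sphereMax n θ : ℝ≥0∞) ≤
      μ {x | ‖x‖ = 1} * (capMax n θ φ : ℝ≥0∞) := by
  classical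
  obtain ⟨C, hC, card_C⟩ := exists_isCode_card_eq_sphereMax n hθ
  have multiplicity_le (y : EuclideanSpace ℝ (Fin n)) (hy : ‖y‖ = 1) :
      #{x ∈ C | y ∈ sphericalCap x φ} ≤ capMax n θ φ := by
    refine (hC.subset (C.filter_subset _)).card_le_capMax_of_subset_sphericalCap hn hθ hy ?_
    intro x hx
    obtain ⟨hxC, hyx⟩ := Finset.mem_filter.1 hx
    exact (mem_sphericalCap_comm (hC.1 x hxC) hy).2 hyx
  calc μ (sphericalCap (north n) φ) * (sphereMax n θ : ℝ≥0∞)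
      = ∑ _x ∈ C, μ (sphericalCap (north n) φ) := by
        rw [Finset.sum_const, nsmul_eq_mul, card_C, mul_comm]
    _ = ∑ x ∈ C, μ (sphericalCap x φ) := Finset.sum_congr rfl fun x hx ↦
        measure_sphericalCap_eq hμ ((norm_north hn).trans (hC.1 x hx).symm) φ
    _ ≤ μ {x | ‖x‖ = 1} * (capMax n θ φ : ℝ≥0∞) :=
        sum_measure_le_mul_of_card_le (fun x _ ↦ (isClosed_sphericalCap x φ).nullMeasurableSet)
          (fun _ _ _ hy ↦ hy.1) multiplicity_le

open MeasureTheory in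
theorem stmt13 (n : ℕ) (hn : 2 ≤ n) (θ φ : ℝ) (hθ : 0 < θ) (h1 : θ / 2 ≤ φ)
    (h2 : φ ≤ Real.pi / 2) :
    μH[(n : ℝ) - 1] {x : EuclideanSpace ℝ (Fin n) | ‖x‖ = 1 ∧ aDist x (north n) ≤ φ} *
        (sphereMax n θ : ENNReal) ≤
      μH[(n : ℝ) - 1] {x : EuclideanSpace ℝ (Fin n) | ‖x‖ = 1} *
        (capMax n θ φ : ENNReal) :=
  stmt13_general n (zero_lt_two.trans_le hn) θ φ hθ _
    fun T ↦ T.toIsometryEquiv.measurePreserving_hausdorffMeasure _
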